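/- Path coupling contraction: let p* ∈ [0,1] solve φ(p)=p with 0 < φ'(p*) < 1. Then there exist ε, δ > 0 and N such that for all n ≥ N the following holds. Suppose X⁺ ≥ X⁻ are graphs on [n] differing at exactly one edge e, and for both X⁺ and X⁻, for all graphs G on at most L vertices with at least 2 edges and all edges e' of K_n, |r_G(·, e') − p*| < ε. Then there exists a coupling ν (a probability measure on pairs of graphs whose two marginals are the one-step Glauber distributions started from X⁺ and from X⁻ respectively) under which the expected Hamming distance satisfies E_ν[d_H(X⁺(1), X⁻(1))] ≤ 1 − δ/n². -/

import Mathlib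

open Finset

open scoped Classical

noncomputable section

/-- The set of edges of the complete graph `K_n` on vertex set `[n] = Fin n`:
unordered pairs of distinct vertices. -/
abbrev EdgeK (n : ℕ) : Type := {e : Sym2 (Fin n) // ¬ e.IsDiag}

/-- A graph on `[n]`, identified with an element `X ∈ {0,1}^{E(K_n)}`. -/
abbrev Config (n : ℕ) : Type := EdgeK n → Bool

/-- The image of an edge under an injection of vertex sets. -/
def mapEdge {m n : ℕ} (v : Fin m ↪ Fin n) (a : EdgeK m) : EdgeK n :=
  ⟨a.1.map v, fun h => a.2 ((Sym2.isDiag_map v.injective).mp h)⟩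

/-- The complete graph `K_n` as a configuration. -/
def fullConfig (n : ℕ) : Config n := fun _ => true

/-- `X ∪ {e}`. -/
def addEdge {n : ℕ} (X : Config n) (e : EdgeK n) : Config n :=
  fun f => if f = e then true else X f

/-- `X_{e+}` (for `b = true`), resp. `X_{e-}` (for `b = false`). -/
def setEdge {n : ℕ} (X : Config n) (e : EdgeK n) (b : Bool) : Config n :=
  fun f => if f = e then b else X f

/-- `N_G(X)`: the number of tuples of `m` distinct vertices of `[n]` such that every
edge of the pattern graph `G` (a graph on `m` labelled vertices) is mapped to an edge of `X`. -/
def copyCount {n m : ℕ} (X : Config n) (G : Finset (EdgeK m)) : ℕ :=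
  (univ.filter fun v : Fin m ↪ Fin n => ∀ a ∈ G, X (mapEdge v a) = true).card

/-- `N_G(X, e)`: the number of such tuples for `X ∪ {e}` which moreover use the edge `e`. -/
def rootedCount {n m : ℕ} (X : Config n) (G : Finset (EdgeK m)) (e : EdgeK n) : ℕ :=
  (univ.filter fun v : Fin m ↪ Fin n =>
    (∃ a ∈ G, mapEdge v a = e) ∧ ∀ a ∈ G, addEdge X e (mapEdge v a) = true).card

/-- `N_G(X, e, e')`: the number of such tuples for `X ∪ {e, e'}` which use both `e` and `e'`. -/
def rooted2Count {n m : ℕ} (X : Config n) (G : Finset (EdgeK m)) (e e' : EdgeK n) : ℕ :=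
  (univ.filter fun v : Fin m ↪ Fin n =>
    (∃ a ∈ G, mapEdge v a = e) ∧ (∃ a ∈ G, mapEdge v a = e') ∧
      ∀ a ∈ G, addEdge (addEdge X e) e' (mapEdge v a) = true).card

/-- The number of edges of the graph `X`. -/
def edgeCount {n : ℕ} (X : Config n) : ℕ := (univ.filter fun e => X e = true).card

/-- Hamming distance between two graphs: the number of edges of disagreement. -/
def hamDist {n : ℕ} (X Y : Config n) : ℕ := (univ.filter fun f => X f ≠ Y f).card

/-- The Hamiltonian `H(X) = ∑ i, β i * N_{G_i}(X) / n^(|V_i| - 2)`. -/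
def ergmH {s : ℕ} (V : Fin s → ℕ) (Pt : ∀ i, Finset (EdgeK (V i))) (β : Fin s → ℝ)
    (n : ℕ) (X : Config n) : ℝ :=
  ∑ i, β i * (copyCount X (Pt i) : ℝ) / (n : ℝ) ^ (V i - 2)

/-- The Gibbs measure `p_n(X) = exp(H(X)) / Z_n`. -/
def gibbs {s : ℕ} (V : Fin s → ℕ) (Pt : ∀ i, Finset (EdgeK (V i))) (β : Fin s → ℝ)
    (n : ℕ) (X : Config n) : ℝ :=
  Real.exp (ergmH V Pt β n X) / ∑ Y : Config n, Real.exp (ergmH V Pt β n Y)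

/-- `∂_e H(X) = H(X_{e+}) - H(X_{e-})`. -/
def dH {s : ℕ} (V : Fin s → ℕ) (Pt : ∀ i, Finset (EdgeK (V i))) (β : Fin s → ℝ)
    (n : ℕ) (X : Config n) (e : EdgeK n) : ℝ :=
  ergmH V Pt β n (setEdge X e true) - ergmH V Pt β n (setEdge X e false)

/-- The transition kernel of the Glauber dynamics: a uniformly random edge `e` of `K_n` is
chosen and set present with probability `exp(∂_e H(X)) /(1 + exp(∂_e H(X)))`, absent
otherwise. -/
def glauber {s : ℕ} (V : Fin s → ℕ) (Pt : ∀ i, Finset (EdgeK (V i))) (β : Fin s → ℝ)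
    (n : ℕ) (X Y : Config n) : ℝ :=
  ((n.choose 2 : ℝ))⁻¹ * ∑ e : EdgeK n,
    ((if Y = setEdge X e true then
        Real.exp (dH V Pt β n X e) / (1 + Real.exp (dH V Pt β n X e)) else 0)
      + (if Y = setEdge X e false then 1 / (1 + Real.exp (dH V Pt β n X e)) else 0))

/-- The `t`-step distribution of the Markov chain with one-step kernel `K`,
started from a given state. -/
def kernelStep {n : ℕ} (K : Config n → Config n → ℝ) : ℕ → Config n → Config n → ℝ
  | 0 => fun x y => if y = x then 1 else 0
  | (t+1) => fun x y => ∑ z, kernelStep K t x z * K z y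

/-- Total variation distance between two (signed) distributions on `Config n`. -/
def tvDist {n : ℕ} (μ ν : Config n → ℝ) : ℝ := (∑ Y, |μ Y - ν Y|) / 2

/-- `mixes K π t` says that after `t` steps the chain with kernel `K` is within total
variation distance `e⁻¹` of `π` from every starting state. -/
def mixes {n : ℕ} (K : Config n → Config n → ℝ) (π : Config n → ℝ) (t : ℕ) : Prop :=
  ∀ x, tvDist (kernelStep K t x) π ≤ Real.exp (-1)

/-- The mixing time: the least `t` such that from every starting state the chain is within
total variation distance `e⁻¹` of `π`. -/
def mixingTime {n : ℕ} (K : Config n → Config n → ℝ) (π : Config n → ℝ) : ℕ :=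
  sInf {t | mixes K π t}

/-- `Ψ(p) = ∑ i, 2 β_i |E_i| p^(|E_i| - 1)`. -/
def PsiF {s : ℕ} {V : Fin s → ℕ} (Pt : ∀ i, Finset (EdgeK (V i))) (β : Fin s → ℝ)
    (p : ℝ) : ℝ :=
  ∑ i, 2 * β i * ((Pt i).card : ℝ) * p ^ ((Pt i).card - 1)

/-- `φ(p) = exp(Ψ(p)) / (1 + exp(Ψ(p)))`. -/
def phiF {s : ℕ} {V : Fin s → ℕ} (Pt : ∀ i, Finset (EdgeK (V i))) (β : Fin s → ℝ)
    (p : ℝ) : ℝ :=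
  Real.exp (PsiF Pt β p) / (1 + Real.exp (PsiF Pt β p))

/-- High temperature phase: `φ(p) = p` has a unique solution `p*` (in `[0,1]`), which
moreover satisfies `φ'(p*) < 1`. -/
def HighTemp {s : ℕ} {V : Fin s → ℕ} (Pt : ∀ i, Finset (EdgeK (V i))) (β : Fin s → ℝ)
    (pstar : ℝ) : Prop :=
  pstar ∈ Set.Icc (0:ℝ) 1 ∧ phiF Pt β pstar = pstar ∧
    (∀ q ∈ Set.Icc (0:ℝ) 1, phiF Pt β q = q → q = pstar) ∧
    deriv (phiF Pt β) pstar < 1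

/-- Low temperature phase: `φ(p) = p` has at least two solutions `p` with `φ'(p) < 1`. -/
def LowTemp {s : ℕ} {V : Fin s → ℕ} (Pt : ∀ i, Finset (EdgeK (V i))) (β : Fin s → ℝ) : Prop :=
  ∃ p₁ p₂ : ℝ, p₁ ∈ Set.Icc (0:ℝ) 1 ∧ p₂ ∈ Set.Icc (0:ℝ) 1 ∧ p₁ ≠ p₂ ∧
    phiF Pt β p₁ = p₁ ∧ phiF Pt β p₂ = p₂ ∧
    deriv (phiF Pt β) p₁ < 1 ∧ deriv (phiF Pt β) p₂ < 1

/-- `r_G(X, e) = (N_G(X,e) / (2 |E(G)| n^(|V(G)|-2)))^(1/(|E(G)|-1))`. -/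
def rG {n m : ℕ} (X : Config n) (G : Finset (EdgeK m)) (e : EdgeK n) : ℝ :=
  ((rootedCount X G e : ℝ) / (2 * (G.card : ℝ) * (n : ℝ) ^ (m - 2))) ^ (((G.card : ℝ) - 1)⁻¹)

/-- The set of values `r_G(X,e)` over all edges `e` of `K_n` and all graphs `G` on at
most `L` vertices with at least two edges. -/
def rSet (L n : ℕ) (X : Config n) : Set ℝ :=
  {r | ∃ m, m ≤ L ∧ ∃ G : Finset (EdgeK m), 2 ≤ G.card ∧ ∃ e : EdgeK n, r = rG X G e}

/-- `r̄(X)`: the maximum of `r_G(X,e)` over all edges `e` of `K_n` and all graphs `G` on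
at most `L` vertices with at least two edges. -/
def rbar (L n : ℕ) (X : Config n) : ℝ := sSup (rSet L n X)

/-- `r_min(X)`: the corresponding minimum. -/
def rmin (L n : ℕ) (X : Config n) : ℝ := sInf (rSet L n X)

/-- The cycle `C_l` on `l` labelled vertices, as a pattern graph. -/
def cyclePattern (l : ℕ) [NeZero l] : Finset (EdgeK l) :=
  univ.filter fun e => ∃ i : Fin l, e.1 = s(i, i + 1)

/-- The probability of a length-`T` trajectory `w` for the chain with kernel `K`
started at `x`. -/
def trajProb {n T : ℕ} (K : Config n → Config n → ℝ) (x : Config n)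
    (w : Fin (T+1) → Config n) : ℝ :=
  (if w 0 = x then 1 else 0) * ∏ i : Fin T, K (w i.castSucc) (w i.succ)

/-- Two edges of `K_n` share a vertex. -/
def sharesVertex {n : ℕ} (e e' : EdgeK n) : Prop := ∃ v, v ∈ e.1 ∧ v ∈ e'.1

end

theorem mapEdge_inj {m n : ℕ} (v : Fin m ↪ Fin n) {a b : EdgeK m} (h : mapEdge v a = mapEdge v b) :
    a = b := by
  apply Subtype.ext
  exact Sym2.map.injective v.injective (congrArg Subtype.val h)

theorem copyCount_set {n m : ℕ} (X : Config n) (G : Finset (EdgeK m)) (f : EdgeK n) :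
    copyCount (setEdge X f true) G = copyCount (setEdge X f false) G + rootedCount X G f := by
  unfold copyCount rootedCount
  rw [← Finset.card_union_of_disjoint]
  · congr 1
    ext v
    simp only [mem_filter, mem_univ, true_and, mem_union]
    simp only [setEdge, addEdge]
    constructor
    · intro h
      by_cases hx : ∃ a ∈ G, mapEdge v a = f
      · exact Or.inr ⟨hx, h⟩
      · left
        push Not at hx
        intro a ha
        have := h a ha
        simpa [hx a ha] using this
    · rintro (h | h)
      · intro a ha
        have := h a ha
        split_ifs with h1
        · rfl
        · simpa [h1] using this
      · exact h.2
  · rw [Finset.disjoint_left]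
    intro v hv hv2
    simp only [mem_filter, mem_univ, true_and] at hv hv2
    simp only [setEdge] at hv hv2
    obtain ⟨⟨a, ha, h1⟩, -⟩ := hv2
    have := hv a ha
    simp [h1] at this

theorem dH_eq {s : ℕ} (V : Fin s → ℕ) (Pt : ∀ i, Finset (EdgeK (V i))) (β : Fin s → ℝ)
    (n : ℕ) (X : Config n) (f : EdgeK n) :
    dH V Pt β n X f = ∑ i, β i * (rootedCount X (Pt i) f : ℝ) / (n : ℝ) ^ (V i - 2) := by
  unfold dH ergmH
  rw [← Finset.sum_sub_distrib]
  refine Finset.sum_congr rfl fun i _ => ?_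
  rw [copyCount_set]
  push_cast
  ring

theorem rootedCount_mono {n m : ℕ} {X Y : Config n} (h : ∀ f, X f = true → Y f = true)
    (G : Finset (EdgeK m)) (f : EdgeK n) : rootedCount X G f ≤ rootedCount Y G f := by
  unfold rootedCount
  apply Finset.card_le_card
  intro v
  simp only [mem_filter, mem_univ, true_and]
  simp only [addEdge]
  rintro ⟨h1, h2⟩
  refine ⟨h1, fun a ha => ?_⟩
  have := h2 a ha
  split_ifs at this ⊢ with h3
  · rfl
  · exact h _ this

theorem rootedCount_sum {n m : ℕ} {Xp Xm : Config n} {e : EdgeK n}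
    (hoff : ∀ f : EdgeK n, f ≠ e → Xp f = Xm f) (G : Finset (EdgeK m)) :
    ∑ f ∈ univ.erase e, rootedCount Xp G f ≤
      ∑ f ∈ univ.erase e, rootedCount Xm G f + ∑ a ∈ G, rootedCount Xp (G.erase a) e := by
  have key : ∀ f ∈ univ.erase e, rootedCount Xp G f ≤ rootedCount Xm G f +
      ∑ a ∈ G, (univ.filter fun v : Fin m ↪ Fin n => mapEdge v a = f ∧
        ((∃ b ∈ G.erase a, mapEdge v b = e) ∧
          ∀ b ∈ G.erase a, addEdge Xp e (mapEdge v b) = true)).card := by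
    intro f hf
    have hfe : f ≠ e := Finset.ne_of_mem_erase hf
    refine le_trans ?_ (Nat.add_le_add_left Finset.card_biUnion_le _)
    unfold rootedCount
    refine le_trans (Finset.card_le_card ?_) (Finset.card_union_le _ _)
    intro v
    simp only [mem_filter, mem_univ, true_and, mem_union, mem_biUnion]
    simp only [addEdge]
    rintro ⟨⟨a, ha, h1⟩, h2⟩
    by_cases hx : ∃ b ∈ G, mapEdge v b = e
    · right
      obtain ⟨b, hb, hbe⟩ := hx
      refine ⟨a, ha, h1, ⟨b, ?_, hbe⟩, ?_⟩
      · refine Finset.mem_erase.2 ⟨?_, hb⟩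
        rintro rfl
        exact hfe (h1.symm.trans hbe)
      · intro c hc
        have hc' := Finset.mem_erase.1 hc
        have h3 := h2 c hc'.2
        have h4 : mapEdge v c ≠ f := fun h => hc'.1 (mapEdge_inj v (h.trans h1.symm))
        rw [if_neg h4] at h3
        split_ifs
        · rfl
        · exact h3
    · left
      push Not at hx
      refine ⟨⟨a, ha, h1⟩, fun c hc => ?_⟩
      rw [← hoff _ (hx c hc)]
      exact h2 c hc
  refine (Finset.sum_le_sum key).trans ?_
  rw [Finset.sum_add_distrib]
  apply Nat.add_le_add_left
  rw [Finset.sum_comm]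
  refine Finset.sum_le_sum fun a _ => ?_
  unfold rootedCount
  rw [← Finset.card_biUnion]
  · apply Finset.card_le_card
    intro v
    simp only [mem_filter, mem_univ, true_and, mem_biUnion]
    rintro ⟨f, -, -, h⟩
    exact h
  · intro f _ g _ hfg
    simp only [Function.onFun]
    rw [Finset.disjoint_left]
    intro v h1 h2
    simp only [mem_filter, mem_univ, true_and] at h1 h2
    exact hfg (h1.1.symm.trans h2.1)

theorem card_EdgeK (n : ℕ) : Fintype.card (EdgeK n) = n.choose 2 := by
  have := Sym2.card_subtype_not_diag (α := Fin n)
  rw [Fintype.card_fin] at this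
  rw [← this]

theorem exists_perm_edge {n : ℕ} (e f : EdgeK n) :
    ∃ σ : Equiv.Perm (Fin n), mapEdge σ.toEmbedding e = f := by
  obtain ⟨e, he⟩ := e
  obtain ⟨f, hf⟩ := f
  induction e using Sym2.ind with
  | _ x y =>
  induction f using Sym2.ind with
  | _ z w =>
  simp only [Sym2.mk_isDiag_iff] at he hf
  have hz : Equiv.swap x z y ≠ z := by
    intro h
    have : Equiv.swap x z y = Equiv.swap x z x := by rw [h, Equiv.swap_apply_left]
    exact he ((Equiv.swap x z).injective this).symm
  refine ⟨(Equiv.swap x z).trans (Equiv.swap (Equiv.swap x z y) w), ?_⟩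
  apply Subtype.ext
  simp only [mapEdge, Sym2.map_mk, Equiv.coe_toEmbedding, Equiv.trans_apply,
    Equiv.swap_apply_left]
  rw [Equiv.swap_apply_of_ne_of_ne hz.symm hf]

theorem count_single {n m : ℕ} (hm : 2 ≤ m) (a : EdgeK m) (e : EdgeK n) :
    (univ.filter fun v : Fin m ↪ Fin n => mapEdge v a = e).card =
      2 * (n - 2).descFactorial (m - 2) := by
  set T : EdgeK n → ℕ := fun e => (univ.filter fun v : Fin m ↪ Fin n => mapEdge v a = e).card
    with hT
  have hle : ∀ e f, T e ≤ T f := by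
    intro e f
    obtain ⟨σ, hσ⟩ := exists_perm_edge e f
    refine Finset.card_le_card_of_injOn (fun v => v.trans σ.toEmbedding) ?_ ?_
    · intro v hv
      simp only [coe_filter, mem_univ, true_and, Set.mem_ofPred_eq] at hv ⊢
      rw [← hσ, ← hv]
      apply Subtype.ext
      simp [mapEdge, Sym2.map_map]
    · intro v _ w _ h
      ext x
      have := congrArg (fun u : Fin m ↪ Fin n => u x) h
      simp at this
      rw [this]
  have hsum : ∑ f, T f = n.descFactorial m := by
    have := Finset.card_eq_sum_card_fiberwise (f := fun v : Fin m ↪ Fin n => mapEdge v a)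
      (s := univ) (t := univ) (fun _ _ => by simp)
    rw [Finset.card_univ, Fintype.card_embedding_eq] at this
    simp only [Fintype.card_fin] at this
    rw [this]
  have hconst : ∀ f, T f = T e := fun f => le_antisymm (hle _ _) (hle _ _)
  simp only [hconst, Finset.sum_const, Finset.card_univ, card_EdgeK, smul_eq_mul] at hsum
  change T e = _
  have hpos : 0 < n.choose 2 := by
    rw [← card_EdgeK]
    exact Fintype.card_pos_iff.2 ⟨e⟩
  have hn : 2 ≤ n := by
    by_contra h
    rw [Nat.choose_eq_zero_of_lt (by omega)] at hpos
    omega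
  have h2 := Nat.descFactorial_eq_factorial_mul_choose n 2
  obtain ⟨k, rfl⟩ := Nat.exists_eq_add_of_le' hn
  obtain ⟨l, rfl⟩ := Nat.exists_eq_add_of_le' hm
  simp only [Nat.succ_descFactorial_succ, Nat.descFactorial_zero, Nat.factorial,
    Nat.add_sub_cancel] at *
  apply Nat.eq_of_mul_eq_mul_left hpos
  rw [hsum]
  rw [show (k+2).choose 2 * (2 * k.descFactorial l) = (2 * (k+2).choose 2) * k.descFactorial l by ring]
  have : 2 * (k+2).choose 2 = (k+1+1) * ((k+1) * 1) := by rw [h2]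
  rw [this]; ring

theorem rooted_single {n m : ℕ} (hm : 2 ≤ m) (X : Config n) (G : Finset (EdgeK m))
    (hG : G.card = 1) (e : EdgeK n) :
    rootedCount X G e = 2 * (n - 2).descFactorial (m - 2) := by
  obtain ⟨a, rfl⟩ := Finset.card_eq_one.1 hG
  rw [← count_single hm a e]
  unfold rootedCount
  congr 1
  ext v
  simp only [mem_filter, mem_univ, true_and, mem_singleton, exists_eq_left, forall_eq]
  simp only [addEdge]
  constructor
  · exact fun h => h.1
  · intro h
    exact ⟨h, by simp [h]⟩

theorem rG_nonneg {n m : ℕ} (X : Config n) (G : Finset (EdgeK m)) (e : EdgeK n) : 0 ≤ rG X G e := by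
  unfold rG; positivity

theorem rooted_eq_rG {n m : ℕ} (hn : 0 < n) (X : Config n) (G : Finset (EdgeK m))
    (hG : 2 ≤ G.card) (e : EdgeK n) :
    (rootedCount X G e : ℝ) / (n : ℝ) ^ (m - 2) = 2 * (G.card : ℝ) * rG X G e ^ (G.card - 1) := by
  unfold rG
  have h1 : ((G.card : ℝ) - 1) = ((G.card - 1 : ℕ) : ℝ) := by
    rw [Nat.cast_sub (by omega)]; simp
  rw [h1, Real.rpow_inv_natCast_pow (by positivity) (by omega)]
  have : (0:ℝ) < n := by exact_mod_cast hn
  have : (0:ℝ) < G.card := by exact_mod_cast (by omega : 0 < G.card)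
  field_simp

theorem rooted_zero {n m : ℕ} (X : Config n) (G : Finset (EdgeK m))
    (hG : G.card = 0) (e : EdgeK n) : rootedCount X G e = 0 := by
  rw [Finset.card_eq_zero] at hG
  subst hG
  simp [rootedCount]

theorem hamDist_set_same {n : ℕ} {Xp Xm : Config n} {e : EdgeK n}
    (hoff : ∀ f : EdgeK n, f ≠ e → Xp f = Xm f) (f : EdgeK n) (b : Bool) :
    hamDist (setEdge Xp f b) (setEdge Xm f b) ≤ 1 := by
  unfold hamDist
  rw [← Finset.card_singleton e]
  apply Finset.card_le_card
  intro g
  simp only [mem_filter, mem_univ, true_and, mem_singleton]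
  simp only [setEdge]
  intro h
  by_contra hg
  apply h
  rw [hoff g hg]

theorem setEdge_eq {n : ℕ} {Xp Xm : Config n} {e : EdgeK n}
    (hoff : ∀ f : EdgeK n, f ≠ e → Xp f = Xm f) (b : Bool) :
    setEdge Xp e b = setEdge Xm e b := by
  funext g
  unfold setEdge
  split_ifs with h
  · rfl
  · exact hoff g h

theorem hamDist_set_diff {n : ℕ} {Xp Xm : Config n} {e : EdgeK n}
    (hoff : ∀ f : EdgeK n, f ≠ e → Xp f = Xm f) (f : EdgeK n) (b c : Bool) :
    hamDist (setEdge Xp f b) (setEdge Xm f c) ≤ 2 := by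
  unfold hamDist
  refine le_trans (Finset.card_le_card (t := {e, f}) ?_) Finset.card_le_two
  intro g
  simp only [mem_filter, mem_univ, true_and, mem_insert, mem_singleton]
  simp only [setEdge]
  intro h
  by_contra hg
  push Not at hg
  apply h
  rw [if_neg hg.2, if_neg hg.2, hoff g hg.1]

/-- logistic function -/
noncomputable def lgst (x : ℝ) : ℝ := Real.exp x / (1 + Real.exp x)

theorem lgst_eq (x : ℝ) : lgst x = 1 - 1 / (1 + Real.exp x) := by
  unfold lgst
  have := Real.exp_pos x
  field_simp
  ring

theorem lgst_nonneg (x : ℝ) : 0 ≤ lgst x := by unfold lgst; positivity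

theorem lgst_mono {x y : ℝ} (h : x ≤ y) : lgst x ≤ lgst y := by
  rw [lgst_eq, lgst_eq]
  have := Real.exp_pos x
  have := Real.exp_le_exp.2 h
  gcongr

theorem lgst_le_one (x : ℝ) : lgst x ≤ 1 := by
  rw [lgst_eq]
  have : 0 ≤ 1 / (1 + Real.exp x) := by positivity
  linarith

/-- The monotone coupling. -/
theorem exists_coupling {s : ℕ} (V : Fin s → ℕ) (Pt : ∀ i, Finset (EdgeK (V i))) (β : Fin s → ℝ)
    (n : ℕ) (Xp Xm : Config n) (e : EdgeK n)
    (hoff : ∀ f : EdgeK n, f ≠ e → Xp f = Xm f)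
    (hmono : ∀ f, dH V Pt β n Xm f ≤ dH V Pt β n Xp f) (S : ℝ)
    (hS : ∑ f ∈ univ.erase e, (lgst (dH V Pt β n Xp f) - lgst (dH V Pt β n Xm f)) ≤ S) :
    ∃ ν : Config n × Config n → ℝ,
          (∀ z, 0 ≤ ν z) ∧ (∑ z, ν z = 1) ∧
          (∀ Y, ∑ Z, ν (Y, Z) = glauber V Pt β n Xp Y) ∧
          (∀ Z, ∑ Y, ν (Y, Z) = glauber V Pt β n Xm Z) ∧
          ∑ z : Config n × Config n, ν z * (hamDist z.1 z.2 : ℝ) ≤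
            1 - (1 - S) / (n.choose 2 : ℝ) := by
  set C : ℝ := (n.choose 2 : ℝ) with hC
  have hCpos : 0 < C := by
    rw [hC, ← card_EdgeK]
    exact_mod_cast Fintype.card_pos_iff.2 ⟨e⟩
  set P : EdgeK n → ℝ := fun f => lgst (dH V Pt β n Xp f) with hP
  set M : EdgeK n → ℝ := fun f => lgst (dH V Pt β n Xm f) with hM
  have hMP : ∀ f, M f ≤ P f := fun f => lgst_mono (hmono f)
  have hM0 : ∀ f, 0 ≤ M f := fun f => lgst_nonneg _
  have hP1 : ∀ f, P f ≤ 1 := fun f => lgst_le_one _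
  let ν : Config n × Config n → ℝ := fun z => C⁻¹ * ∑ f,
    ((if z.1 = setEdge Xp f true ∧ z.2 = setEdge Xm f true then M f else 0) +
     (if z.1 = setEdge Xp f true ∧ z.2 = setEdge Xm f false then P f - M f else 0) +
     (if z.1 = setEdge Xp f false ∧ z.2 = setEdge Xm f false then 1 - P f else 0))
  have hint : ∀ h : Config n × Config n → ℝ, ∑ z, ν z * h z = C⁻¹ * ∑ f,
      (M f * h (setEdge Xp f true, setEdge Xm f true) +
       (P f - M f) * h (setEdge Xp f true, setEdge Xm f false) +
       (1 - P f) * h (setEdge Xp f false, setEdge Xm f false)) := by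
    intro h
    simp only [ν, mul_assoc, ← Finset.mul_sum]
    congr 1
    simp only [Finset.sum_mul]
    rw [Finset.sum_comm]
    refine Finset.sum_congr rfl fun f _ => ?_
    simp only [add_mul, Finset.sum_add_distrib, ite_mul, zero_mul]
    have hone : ∀ (A B : Config n) (c : ℝ), (∑ z : Config n × Config n,
        if z.1 = A ∧ z.2 = B then c * h z else 0) = c * h (A, B) := by
      intro A B c
      have : ∀ z : Config n × Config n, (z.1 = A ∧ z.2 = B) ↔ z = (A, B) := by
        intro z; rw [Prod.ext_iff]
      simp only [this, Finset.sum_ite_eq', mem_univ, if_true]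
    rw [hone, hone, hone]
  refine ⟨ν, ?_, ?_, ?_, ?_, ?_⟩
  · intro z
    refine mul_nonneg (by positivity) (Finset.sum_nonneg fun f _ => ?_)
    have h1 := hMP f
    have h2 := hM0 f
    have h3 := hP1 f
    split_ifs <;> linarith
  · have := hint (fun _ => 1)
    simp only [mul_one] at this
    rw [this]
    have : ∀ f, M f + (P f - M f) + (1 - P f) = 1 := fun f => by ring
    simp only [this, Finset.sum_const, Finset.card_univ, card_EdgeK]
    rw [nsmul_eq_mul, mul_one]
    exact inv_mul_cancel₀ hCpos.ne'
  · intro Y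
    have := hint (fun z => if z.1 = Y then 1 else 0)
    rw [Fintype.sum_prod_type] at this
    simp only [mul_ite, mul_one, mul_zero] at this
    rw [Finset.sum_comm] at this
    simp only [Finset.sum_ite_eq', mem_univ, if_true] at this
    rw [this]
    unfold glauber
    congr 1
    refine Finset.sum_congr rfl fun f _ => ?_
    have h1 : Real.exp (dH V Pt β n Xp f) / (1 + Real.exp (dH V Pt β n Xp f)) = P f := rfl
    have h2 : 1 / (1 + Real.exp (dH V Pt β n Xp f)) = 1 - P f := by
      simp only [hP]; rw [lgst_eq]; ring
    rw [h1, h2]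
    simp only [eq_comm (a := Y)]
    split_ifs <;> ring
  · intro Y
    have := hint (fun z => if z.2 = Y then 1 else 0)
    rw [Fintype.sum_prod_type] at this
    simp only [mul_ite, mul_one, mul_zero] at this
    simp only [Finset.sum_ite_eq', mem_univ, if_true] at this
    rw [this]
    unfold glauber
    congr 1
    refine Finset.sum_congr rfl fun f _ => ?_
    have h1 : Real.exp (dH V Pt β n Xm f) / (1 + Real.exp (dH V Pt β n Xm f)) = M f := rfl
    have h2 : 1 / (1 + Real.exp (dH V Pt β n Xm f)) = 1 - M f := by
      simp only [hM]; rw [lgst_eq]; ring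
    rw [h1, h2]
    simp only [eq_comm (a := Y)]
    split_ifs <;> ring
  · rw [hint (fun z => (hamDist z.1 z.2 : ℝ))]
    have hPMe : P e = M e := by
      simp only [hP, hM, dH, setEdge_eq hoff]
    have hself : ∀ X : Config n, hamDist X X = 0 := by intro X; simp [hamDist]
    rw [← Finset.add_sum_erase _ _ (mem_univ e)]
    simp only [setEdge_eq hoff, hself, hPMe]
    have hb : ∑ f ∈ univ.erase e,
      (M f * (hamDist (setEdge Xp f true) (setEdge Xm f true) : ℝ) +
       (P f - M f) * (hamDist (setEdge Xp f true) (setEdge Xm f false) : ℝ) +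
       (1 - P f) * (hamDist (setEdge Xp f false) (setEdge Xm f false) : ℝ)) ≤
       ∑ f ∈ univ.erase e, (1 + (P f - M f)) := by
      refine Finset.sum_le_sum fun f _ => ?_
      have a1 : (hamDist (setEdge Xp f true) (setEdge Xm f true) : ℝ) ≤ 1 := by
        exact_mod_cast hamDist_set_same hoff f true
      have a2 : (hamDist (setEdge Xp f false) (setEdge Xm f false) : ℝ) ≤ 1 := by
        exact_mod_cast hamDist_set_same hoff f false
      have a3 : (hamDist (setEdge Xp f true) (setEdge Xm f false) : ℝ) ≤ 2 := by
        exact_mod_cast hamDist_set_diff hoff f true false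
      have h1 := mul_le_mul_of_nonneg_left a1 (hM0 f)
      have h2 := mul_le_mul_of_nonneg_left a2 (sub_nonneg.2 (hP1 f))
      have h3 := mul_le_mul_of_nonneg_left a3 (sub_nonneg.2 (hMP f))
      linarith
    rw [Finset.sum_add_distrib (f := fun _ => (1:ℝ))] at hb
    have hcard : ∑ f ∈ univ.erase e, (1:ℝ) = C - 1 := by
      rw [Finset.sum_const, Finset.card_erase_of_mem (mem_univ e), Finset.card_univ, nsmul_eq_mul,
        mul_one, Nat.cast_sub (Fintype.card_pos_iff.2 ⟨e⟩), card_EdgeK]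
      simp [hC]
    rw [hcard] at hb
    have : 1 - (1 - S) / C = C⁻¹ * (C - 1 + S) := by field_simp; ring
    rw [this]
    apply mul_le_mul_of_nonneg_left _ (by positivity)
    simp only [Nat.cast_zero, mul_zero, add_zero, zero_add]
    linarith

/-- derivative of `PsiF` -/
noncomputable def DPsi {s : ℕ} {V : Fin s → ℕ} (Pt : ∀ i, Finset (EdgeK (V i))) (β : Fin s → ℝ)
    (p : ℝ) : ℝ :=
  ∑ i, 2 * β i * ((Pt i).card : ℝ) * (((Pt i).card - 1 : ℕ) * p ^ ((Pt i).card - 1 - 1))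

theorem hasDerivAt_Psi {s : ℕ} {V : Fin s → ℕ} (Pt : ∀ i, Finset (EdgeK (V i))) (β : Fin s → ℝ)
    (p : ℝ) : HasDerivAt (PsiF Pt β) (DPsi Pt β p) p := by
  unfold DPsi
  have : PsiF Pt β = fun p => ∑ i, 2 * β i * ((Pt i).card : ℝ) * p ^ ((Pt i).card - 1) := rfl
  rw [this]
  apply HasDerivAt.fun_sum
  intro i _
  exact (hasDerivAt_pow _ _).const_mul _

theorem hasStrictDerivAt_lgst (x : ℝ) :
    HasStrictDerivAt lgst (Real.exp x / (1 + Real.exp x) ^ 2) x := by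
  have h1 := Real.hasStrictDerivAt_exp x
  have h2 : HasStrictDerivAt (fun y => 1 + Real.exp y) (Real.exp x) x := by
    simpa using h1.const_add 1
  have hne : 1 + Real.exp x ≠ 0 := by have := Real.exp_pos x; positivity
  have h3 := h1.fun_div h2 hne
  have heq : lgst = fun y => Real.exp y / (1 + Real.exp y) := rfl
  rw [heq]
  have h4 : Real.exp x / (1 + Real.exp x) ^ 2 =
      (Real.exp x * (1 + Real.exp x) - Real.exp x * Real.exp x) / (1 + Real.exp x) ^ 2 := by
    congr 1
    ring
  rw [h4]
  exact h3

theorem rooted_le {n m L : ℕ} (hn : 2 ≤ n) (hm : 2 ≤ m) (hmL : m ≤ L) (X : Config n) {p ε : ℝ}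
    (h : ∀ m : ℕ, m ≤ L → ∀ G : Finset (EdgeK m), 2 ≤ G.card → ∀ e' : EdgeK n,
          |rG X G e' - p| < ε)
    (G : Finset (EdgeK m)) (hG : 1 ≤ G.card) (e : EdgeK n) :
    (rootedCount X G e : ℝ) / (n : ℝ) ^ (m - 2) ≤ 2 * (G.card : ℝ) * (p + ε) ^ (G.card - 1) := by
  have hn0 : (0:ℝ) < n := by exact_mod_cast (by omega : 0 < n)
  rcases Nat.lt_or_ge 1 G.card with h1 | h1
  · rw [rooted_eq_rG (by omega) X G h1 e]
    have := (abs_lt.1 (h m hmL G h1 e)).2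
    have h0 := rG_nonneg X G e
    gcongr
    linarith
  · have hc : G.card = 1 := le_antisymm h1 hG
    rw [rooted_single hm X G hc e, hc]
    rw [div_le_iff₀ (by positivity)]
    have h2 : (n - 2).descFactorial (m - 2) ≤ n ^ (m - 2) :=
      (Nat.descFactorial_le_pow _ _).trans (Nat.pow_le_pow_left (by omega) _)
    have h3 : (((n - 2).descFactorial (m - 2) : ℕ) : ℝ) ≤ (n : ℝ) ^ (m - 2) := by exact_mod_cast h2
    push_cast
    simp
    linarith

theorem tendsto_desc (k : ℕ) :
    Filter.Tendsto (fun n : ℕ => ((n - 2).descFactorial k : ℝ) / (n : ℝ) ^ k) Filter.atTop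
      (nhds 1) := by
  have hlow : Filter.Tendsto (fun n : ℕ => (1 - ((k + 1 : ℕ) : ℝ) / (n : ℝ)) ^ k) Filter.atTop
      (nhds 1) := by
    have := ((tendsto_const_div_atTop_nhds_zero_nat ((k + 1 : ℕ) : ℝ)).const_sub 1).pow k
    simpa using this
  refine tendsto_of_tendsto_of_tendsto_of_le_of_le' hlow tendsto_const_nhds ?_ ?_
  · filter_upwards [Filter.eventually_ge_atTop (k + 3)] with n hn
    have hn0 : (0:ℝ) < n := by exact_mod_cast (by omega : 0 < n)
    rw [one_sub_div hn0.ne', div_pow]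
    gcongr
    have h := Nat.pow_sub_le_descFactorial (n - 2) k
    have h2 : ((n - 2 + 1 - k : ℕ) : ℝ) = (n : ℝ) - ((k + 1 : ℕ) : ℝ) := by
      rw [show n - 2 + 1 - k = n - (k + 1) by omega, Nat.cast_sub (by omega)]
    rw [← h2]
    exact_mod_cast h
  · filter_upwards [Filter.eventually_ge_atTop 1] with n hn
    have hn0 : (0:ℝ) < n := by exact_mod_cast hn
    rw [div_le_one (by positivity)]
    exact_mod_cast (Nat.descFactorial_le_pow _ _).trans (Nat.pow_le_pow_left (by omega) _)

theorem dH_sum_le {L s : ℕ} (hs : 0 < s)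
    (V : Fin s → ℕ) (Pt : ∀ i, Finset (EdgeK (V i))) (β : Fin s → ℝ)
    (hV2 : ∀ i, 2 ≤ V i) (hVL : ∀ i, V i ≤ L)
    (hG1E : (Pt ⟨0, hs⟩).card = 1)
    (hβ : ∀ i : Fin s, 0 < (i : ℕ) → 0 < β i)
    {n : ℕ} (hn : 2 ≤ n) (Xp Xm : Config n) (e : EdgeK n)
    (hoff : ∀ f : EdgeK n, f ≠ e → Xp f = Xm f) {p ε : ℝ}
    (h : ∀ m : ℕ, m ≤ L → ∀ G : Finset (EdgeK m), 2 ≤ G.card → ∀ e' : EdgeK n,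
          |rG Xp G e' - p| < ε) :
    ∑ f ∈ univ.erase e, (dH V Pt β n Xp f - dH V Pt β n Xm f) ≤ DPsi Pt β (p + ε) := by
  have hn0 : (0:ℝ) < n := by exact_mod_cast (by omega : 0 < n)
  simp only [dH_eq, ← Finset.sum_sub_distrib]
  rw [Finset.sum_comm]
  unfold DPsi
  refine Finset.sum_le_sum fun i _ => ?_
  rcases Nat.lt_or_ge 1 (Pt i).card with h1 | h1
  · have hi : 0 < (i : ℕ) := by
      rcases Nat.eq_zero_or_pos (i : ℕ) with h0 | h0
      · have : i = ⟨0, hs⟩ := Fin.ext h0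
        rw [this, hG1E] at h1
        omega
      · exact h0
    have hb := hβ i hi
    have hsum := rootedCount_sum hoff (Pt i)
    have hsum' : ∑ f ∈ univ.erase e, (rootedCount Xp (Pt i) f : ℝ) ≤
      ∑ f ∈ univ.erase e, (rootedCount Xm (Pt i) f : ℝ)
        + ∑ a ∈ Pt i, (rootedCount Xp ((Pt i).erase a) e : ℝ) := by exact_mod_cast hsum
    have hterm : ∑ a ∈ Pt i, (rootedCount Xp ((Pt i).erase a) e : ℝ) / (n : ℝ) ^ (V i - 2) ≤
        ∑ a ∈ Pt i, 2 * (((Pt i).card - 1 : ℕ) : ℝ) * (p + ε) ^ ((Pt i).card - 1 - 1) := by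
      refine Finset.sum_le_sum fun a ha => ?_
      have hc := Finset.card_erase_of_mem ha
      have := rooted_le hn (hV2 i) (hVL i) Xp h ((Pt i).erase a) (by omega) e
      rwa [hc] at this
    rw [Finset.sum_const, nsmul_eq_mul, ← Finset.sum_div] at hterm
    have e1 : ∑ f ∈ univ.erase e, (β i * (rootedCount Xp (Pt i) f : ℝ) / (n : ℝ) ^ (V i - 2) -
        β i * (rootedCount Xm (Pt i) f : ℝ) / (n : ℝ) ^ (V i - 2)) =
        β i * ((∑ f ∈ univ.erase e, (rootedCount Xp (Pt i) f : ℝ) -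
          ∑ f ∈ univ.erase e, (rootedCount Xm (Pt i) f : ℝ)) / (n : ℝ) ^ (V i - 2)) := by
      rw [← Finset.sum_sub_distrib, Finset.sum_div, Finset.mul_sum]
      refine Finset.sum_congr rfl fun f _ => ?_
      ring
    rw [e1]
    have h2 : (∑ f ∈ univ.erase e, (rootedCount Xp (Pt i) f : ℝ) -
          ∑ f ∈ univ.erase e, (rootedCount Xm (Pt i) f : ℝ)) / (n : ℝ) ^ (V i - 2) ≤
          (∑ a ∈ Pt i, (rootedCount Xp ((Pt i).erase a) e : ℝ)) / (n : ℝ) ^ (V i - 2) := by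
      gcongr
      linarith
    refine (mul_le_mul_of_nonneg_left (h2.trans hterm) hb.le).trans (le_of_eq ?_)
    ring
  · have hz : (Pt i).card - 1 = 0 := by omega
    rw [hz]
    simp only [Nat.cast_zero, zero_mul, mul_zero]
    refine le_of_eq (Finset.sum_eq_zero fun f _ => ?_)
    rcases Nat.lt_or_ge 0 (Pt i).card with h0 | h0
    · rw [rooted_single (hV2 i) _ _ (by omega), rooted_single (hV2 i) _ _ (by omega), sub_self]
    · rw [rooted_zero _ _ (by omega), rooted_zero _ _ (by omega), sub_self]

theorem dH_mono {s : ℕ} (hs : 0 < s)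
    (V : Fin s → ℕ) (Pt : ∀ i, Finset (EdgeK (V i))) (β : Fin s → ℝ)
    (hV2 : ∀ i, 2 ≤ V i)
    (hG1E : (Pt ⟨0, hs⟩).card = 1)
    (hβ : ∀ i : Fin s, 0 < (i : ℕ) → 0 < β i)
    {n : ℕ} (Xp Xm : Config n) 
    (hle : ∀ f, Xm f = true → Xp f = true) (f : EdgeK n) :
    dH V Pt β n Xm f ≤ dH V Pt β n Xp f := by
  rw [dH_eq, dH_eq]
  refine Finset.sum_le_sum fun i _ => ?_
  rcases Nat.eq_zero_or_pos (i : ℕ) with h0 | h0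
  · have : i = ⟨0, hs⟩ := Fin.ext h0
    subst this
    rw [rooted_single (hV2 _) _ _ hG1E, rooted_single (hV2 _) _ _ hG1E]
  · have hb := hβ i h0
    have := rootedCount_mono hle (Pt i) f
    gcongr


/-- **Path coupling contraction (Lemma 7).** Let `p* ∈ [0,1]` solve `φ(p)=p` with
`0 < φ'(p*) < 1`. There are `ε, δ > 0` such that for large `n`, for any two configurations
`X⁺ ≥ X⁻` differing at exactly one edge `e` whose rooted densities `r_G(·,e')` are all
`ε`-close to `p*`, one step of the Glauber dynamics from the two states can be coupled so
that the expected Hamming distance is at most `1 - δ/n²`. -/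
theorem path_coupling_contraction
    {L s : ℕ} (hL : 2 ≤ L) (hs : 0 < s)
    (V : Fin s → ℕ) (Pt : ∀ i, Finset (EdgeK (V i))) (β : Fin s → ℝ)
    (hV2 : ∀ i, 2 ≤ V i) (hVL : ∀ i, V i ≤ L)
    (hG1V : V ⟨0, hs⟩ = 2) (hG1E : (Pt ⟨0, hs⟩).card = 1)
    (hβ : ∀ i : Fin s, 0 < (i : ℕ) → 0 < β i)
    (pstar : ℝ) (hmem : pstar ∈ Set.Icc (0:ℝ) 1) (hfix : phiF Pt β pstar = pstar)
    (hd0 : 0 < deriv (phiF Pt β) pstar) (hd1 : deriv (phiF Pt β) pstar < 1) :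
    ∃ ε δ : ℝ, 0 < ε ∧ 0 < δ ∧ ∃ N : ℕ, ∀ n ≥ N,
      ∀ (Xp Xm : Config n) (e : EdgeK n),
        (∀ f, Xm f = true → Xp f = true) →
        Xp e ≠ Xm e →
        (∀ f : EdgeK n, f ≠ e → Xp f = Xm f) →
        (∀ m : ℕ, m ≤ L → ∀ G : Finset (EdgeK m), 2 ≤ G.card → ∀ e' : EdgeK n,
          |rG Xp G e' - pstar| < ε ∧ |rG Xm G e' - pstar| < ε) →
        ∃ ν : Config n × Config n → ℝ,
          (∀ z, 0 ≤ ν z) ∧ (∑ z, ν z = 1) ∧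
          (∀ Y, ∑ Z, ν (Y, Z) = glauber V Pt β n Xp Y) ∧
          (∀ Z, ∑ Y, ν (Y, Z) = glauber V Pt β n Xm Z) ∧
          ∑ z : Config n × Config n, ν z * (hamDist z.1 z.2 : ℝ) ≤ 1 - δ / (n : ℝ) ^ 2 := by
  set p := pstar with hp
  set d : ℝ := Real.exp (PsiF Pt β p) / (1 + Real.exp (PsiF Pt β p)) ^ 2 with hd
  have hdpos : 0 < d := by rw [hd]; positivity
  set D : ℝ := DPsi Pt β p with hD
  have hder : deriv (phiF Pt β) p = d * D := by
    have h1 := (hasStrictDerivAt_lgst (PsiF Pt β p)).hasDerivAt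
    exact (h1.comp p (hasDerivAt_Psi Pt β p)).deriv
  rw [hder] at hd0 hd1
  have hDpos : 0 < D := by
    by_contra hneg
    push Not at hneg
    have := mul_nonpos_of_nonneg_of_nonpos hdpos.le hneg
    linarith
  obtain ⟨K, hdK, hKD⟩ : ∃ K : ℝ, d < K ∧ K * D < 1 := by
    refine ⟨d + (1 - d * D) / (2 * D), ?_, ?_⟩
    · have : 0 < (1 - d * D) / (2 * D) := by
        apply div_pos <;> linarith
      linarith
    · have : (d + (1 - d * D) / (2 * D)) * D = d * D + (1 - d * D) / 2 := by
        field_simp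
      rw [this]
      linarith
  have hK0 : 0 < K := hdpos.trans hdK
  -- local Lipschitz bound
  obtain ⟨t, ht, hLip⟩ := (hasStrictDerivAt_lgst (PsiF Pt β p)).hasStrictFDerivAt
    |>.exists_lipschitzOnWith_of_nnnorm_lt (K.toNNReal) (by
      rw [← NNReal.coe_lt_coe]
      rw [coe_nnnorm, Real.coe_toNNReal K hK0.le]
      rw [ContinuousLinearMap.norm_toSpanSingleton, Real.norm_of_nonneg hdpos.le]
      exact hdK)
  obtain ⟨η, hη, hball⟩ := Metric.mem_nhds_iff.1 ht
  have hLip' : ∀ x y : ℝ, |x - PsiF Pt β p| < η → |y - PsiF Pt β p| < η → y ≤ x →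
      lgst x - lgst y ≤ K * (x - y) := by
    intro x y hx hy hxy
    have := hLip.dist_le_mul x (hball (by rwa [Metric.mem_ball, Real.dist_eq])) y
      (hball (by rwa [Metric.mem_ball, Real.dist_eq]))
    rw [Real.dist_eq, Real.dist_eq, abs_of_nonneg (sub_nonneg.2 hxy),
      Real.coe_toNNReal K hK0.le] at this
    exact (le_abs_self _).trans this
  have hsR : (0:ℝ) < s := by exact_mod_cast hs
  have hηs : 0 < η / s := by positivity
  -- choice of ε
  have hε1 : ∀ i, ∃ ε > 0, ∀ r : ℝ, |r - p| < ε →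
      |2 * β i * ((Pt i).card : ℝ) * r ^ ((Pt i).card - 1) -
        2 * β i * ((Pt i).card : ℝ) * p ^ ((Pt i).card - 1)| < η / s := by
    intro i
    have hc : Continuous fun r : ℝ => 2 * β i * ((Pt i).card : ℝ) * r ^ ((Pt i).card - 1) := by
      fun_prop
    obtain ⟨ε, hε, h⟩ := Metric.continuous_iff.1 hc p (η / s) hηs
    refine ⟨ε, hε, fun r hr => ?_⟩
    have := h r (by rwa [Real.dist_eq])
    rwa [Real.dist_eq] at this
  choose E hE0 hE using hε1
  have hcD : Continuous (DPsi Pt β) := by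
    unfold DPsi
    fun_prop
  set c : ℝ := (1 - K * D) / 2 with hc
  have hcpos : 0 < c := by rw [hc]; linarith
  obtain ⟨ε₀, hε₀, hε₀D⟩ := Metric.continuous_iff.1 (hcD.const_mul K) p c hcpos
  have hne : (univ : Finset (Fin s)).Nonempty := ⟨⟨0, hs⟩, mem_univ _⟩
  set ε : ℝ := min (ε₀ / 2) (univ.inf' hne E) with hεdef
  have hεpos : 0 < ε := by
    apply lt_min (by linarith)
    rw [Finset.lt_inf'_iff]
    exact fun i _ => hE0 i
  have hεE : ∀ i, ε ≤ E i := fun i => (min_le_right _ _).trans (Finset.inf'_le _ (mem_univ i))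
  have hKDε : K * DPsi Pt β (p + ε) ≤ 1 - c := by
    have h1 : dist (p + ε) p < ε₀ := by
      rw [Real.dist_eq]
      simp only [add_sub_cancel_left]
      rw [abs_of_pos hεpos]
      have := min_le_left (ε₀ / 2) (univ.inf' hne E)
      linarith
    have h2 := hε₀D (p + ε) h1
    rw [Real.dist_eq] at h2
    have h3 := (abs_lt.1 h2).2
    have h4 : K * D = 1 - 2 * c := by rw [hc]; ring
    change K * DPsi Pt β (p + ε) - K * D < c at h3
    linarith
  -- choice of N
  have hNev : ∀ᶠ n : ℕ in Filter.atTop, ∀ i, |β i * (2 * ((n - 2).descFactorial (V i - 2) : ℝ)) /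
      (n : ℝ) ^ (V i - 2) - 2 * β i| < η / s := by
    rw [Filter.eventually_all]
    intro i
    have h1 := (tendsto_desc (V i - 2)).const_mul (2 * β i)
    rw [mul_one] at h1
    have h2 := (Metric.tendsto_nhds.1 h1) (η / s) hηs
    filter_upwards [h2] with n hn
    rw [Real.dist_eq] at hn
    convert hn using 3
    ring
  obtain ⟨N, hN⟩ := Filter.eventually_atTop.1 hNev
  refine ⟨ε, c, hεpos, hcpos, max N 2, ?_⟩
  intro n hn Xp Xm e hle hneq hoff hr
  have hn2 : 2 ≤ n := (le_max_right _ _).trans hn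
  have hnN := hN n ((le_max_left _ _).trans hn)
  have hclose : ∀ X : Config n, (∀ m : ℕ, m ≤ L → ∀ G : Finset (EdgeK m), 2 ≤ G.card →
      ∀ e' : EdgeK n, |rG X G e' - p| < ε) → ∀ f, |dH V Pt β n X f - PsiF Pt β p| < η := by
    intro X hX f
    rw [dH_eq]
    unfold PsiF
    rw [← Finset.sum_sub_distrib]
    refine (Finset.abs_sum_le_sum_abs _ _).trans_lt ?_
    have hlt : ∀ i ∈ (univ : Finset (Fin s)),
        |β i * (rootedCount X (Pt i) f : ℝ) / (n : ℝ) ^ (V i - 2) -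
          2 * β i * ((Pt i).card : ℝ) * p ^ ((Pt i).card - 1)| < η / s := by
      intro i _
      rcases Nat.lt_or_ge 1 (Pt i).card with h1 | h1
      · rw [mul_div_assoc, rooted_eq_rG (by omega) X (Pt i) h1 f]
        have := hE i _ ((hX (V i) (hVL i) (Pt i) h1 f).trans_le (hεE i))
        convert this using 3
        ring
      · rcases Nat.lt_or_ge 0 (Pt i).card with h0 | h0
        · have hc1 : (Pt i).card = 1 := by omega
          rw [rooted_single (hV2 i) _ _ hc1, hc1]
          simpa using hnN i
        · have hc1 : (Pt i).card = 0 := by omega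
          rw [rooted_zero _ _ hc1, hc1]
          simpa using hηs
    refine (Finset.sum_lt_sum_of_nonempty hne hlt).trans_le ?_
    rw [Finset.sum_const, Finset.card_univ, Fintype.card_fin, nsmul_eq_mul]
    exact le_of_eq (mul_div_cancel₀ _ hsR.ne')
  have hXp := hclose Xp (fun m hm G hG e' => (hr m hm G hG e').1)
  have hXm := hclose Xm (fun m hm G hG e' => (hr m hm G hG e').2)
  have hmono := dH_mono hs V Pt β hV2 hG1E hβ Xp Xm hle
  have hS : ∑ f ∈ univ.erase e, (lgst (dH V Pt β n Xp f) - lgst (dH V Pt β n Xm f)) ≤ 1 - c := by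
    refine (Finset.sum_le_sum fun f _ => hLip' _ _ (hXp f) (hXm f) (hmono f)).trans ?_
    rw [← Finset.mul_sum]
    refine le_trans ?_ hKDε
    exact mul_le_mul_of_nonneg_left (dH_sum_le hs V Pt β hV2 hVL hG1E hβ hn2 Xp Xm e hoff
      (fun m hm G hG e' => (hr m hm G hG e').1)) hK0.le
  obtain ⟨ν, h1, h2, h3, h4, h5⟩ := exists_coupling V Pt β n Xp Xm e hoff hmono (1 - c) hS
  refine ⟨ν, h1, h2, h3, h4, h5.trans ?_⟩
  have hCpos : (0:ℝ) < (n.choose 2 : ℝ) := by exact_mod_cast Nat.choose_pos hn2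
  have hCle : (n.choose 2 : ℝ) ≤ (n : ℝ) ^ 2 := by exact_mod_cast Nat.choose_le_pow n 2
  have : c / (n : ℝ) ^ 2 ≤ (1 - (1 - c)) / (n.choose 2 : ℝ) := by
    rw [sub_sub_cancel]
    gcongr
  linarith
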